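/- Let m ≥ 1 be an integer, let c₁, c₂ > 0, and let (λ_i)_{i≥1} be positive reals satisfying c₁ i^{2/m} ≤ λ_i ≤ c₂ i^{2/m} for all i ≥ 1. Then there exist constants C₁, C₂ > 0 such that for every τ ∈ (0, 1], C₁ τ^{−m/2} ≤ ∑_{i=1}^∞ e^{−λ_i τ} ≤ C₂ τ^{−m/2}. Consequently, τ^{m/2} ∑_{i=1}^∞ e^{−λ_i τ} is bounded above and below by positive constants uniformly in τ ∈ (0,1]. -/

import Mathlib

/-!
Upper bound: each term is at most `exp (-(c₁ τ) (i+1)^(2/m))`, and since this is decreasing in `i`,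
every partial sum is at most `∫₀^∞ exp (-(c₁ τ) x^(2/m)) dx = (c₁ τ)^(-m/2) Γ(m/2 + 1)`.
This also gives summability.

Lower bound: with `N = ⌊τ^(-m/2)⌋ ≥ 1`, each of the first `N` terms has `λ_i τ ≤ c₂`, so the sum
is at least `N e^(-c₂) ≥ (e^(-c₂) / 2) τ^(-m/2)`.
-/

open Real

/-- Comparison of the partial sums with the stretched exponential integral. -/
lemma sum_exp_neg_mul_rpow_le {b p : ℝ} (hb : 0 < b) (hp : 0 < p) (n : ℕ) :
    ∑ i ∈ Finset.range n, Real.exp (-b * ((i : ℝ) + 1) ^ p) ≤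
      b ^ (-1 / p) * Real.Gamma (1 / p + 1) := by
  have hanti : AntitoneOn (fun x : ℝ => Real.exp (-b * x ^ p)) (Set.Icc 0 (0 + (n : ℝ))) := by
    intro x hx y _ hxy
    have h := mul_le_mul_of_nonneg_left (Real.rpow_le_rpow hx.1 hxy hp.le) hb.le
    exact Real.exp_le_exp.2 (by linarith)
  have hval := integral_exp_neg_mul_rpow hp hb
  have hint : MeasureTheory.IntegrableOn (fun x : ℝ => Real.exp (-b * x ^ p)) (Set.Ioi 0) := by
    -- A non-integrable function would have integral `0`, but the value is positive.
    refine MeasureTheory.Integrable.of_integral_ne_zero ?_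
    rw [hval]
    have hG : 0 < Real.Gamma (1 / p + 1) := Real.Gamma_pos_of_pos (by positivity)
    positivity
  have h := hanti.sum_le_integral
  rw [intervalIntegral.integral_of_le (by positivity)] at h
  rw [← hval]
  calc _ = ∑ i ∈ Finset.range n, Real.exp (-b * (0 + ((i + 1 : ℕ) : ℝ)) ^ p) := by simp
    _ ≤ _ := h
    _ ≤ _ := MeasureTheory.setIntegral_mono_set hint
        (Filter.Eventually.of_forall fun x => (Real.exp_pos _).le)
        (LE.le.eventuallyLE Set.Ioc_subset_Ioi_self)


/-- Heat-trace asymptotics under Weyl's law: if `c₁ i^(2/m) ≤ λ_i ≤ c₂ i^(2/m)` (indexing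
`λ_{i+1}` by `i : ℕ`), then there are constants `C₁, C₂ > 0` with
`C₁ τ^(−m/2) ≤ ∑ᵢ e^(−λ_i τ) ≤ C₂ τ^(−m/2)` uniformly for `τ ∈ (0, 1]`. -/
theorem stmt6 (m : ℕ) (hm : 1 ≤ m) (c₁ c₂ : ℝ) (hc₁ : 0 < c₁) (hc₂ : 0 < c₂)
    (lam : ℕ → ℝ) (hpos : ∀ i, 0 < lam i)
    (hlow : ∀ i : ℕ, c₁ * ((i : ℝ) + 1) ^ ((2 : ℝ) / m) ≤ lam i)
    (hup : ∀ i : ℕ, lam i ≤ c₂ * ((i : ℝ) + 1) ^ ((2 : ℝ) / m)) :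
    ∃ C₁ > (0 : ℝ), ∃ C₂ > (0 : ℝ), ∀ τ : ℝ, τ ∈ Set.Ioc (0 : ℝ) 1 →
      C₁ * τ ^ (-(m : ℝ) / 2) ≤ (∑' i, Real.exp (-lam i * τ)) ∧
        (∑' i, Real.exp (-lam i * τ)) ≤ C₂ * τ ^ (-(m : ℝ) / 2) := by
  have hm0 : (0 : ℝ) < m := by exact_mod_cast hm
  have hp : (0 : ℝ) < 2 / m := by positivity
  have hG : 0 < Real.Gamma (1 / ((2 : ℝ) / m) + 1) := Real.Gamma_pos_of_pos (by positivity)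
  refine ⟨Real.exp (-c₂) / 2, by positivity,
    c₁ ^ (-(m : ℝ) / 2) * Real.Gamma (1 / ((2 : ℝ) / m) + 1), by positivity, ?_⟩
  rintro τ ⟨hτ, hτ1⟩
  have hpart : ∀ n : ℕ, ∑ i ∈ Finset.range n, Real.exp (-lam i * τ) ≤
      c₁ ^ (-(m : ℝ) / 2) * Real.Gamma (1 / ((2 : ℝ) / m) + 1) * τ ^ (-(m : ℝ) / 2) := by
    intro n
    have h := sum_exp_neg_mul_rpow_le (mul_pos hc₁ hτ) hp n
    have he : (-1 : ℝ) / (2 / m) = -(m : ℝ) / 2 := by field_simp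
    rw [he, Real.mul_rpow hc₁.le hτ.le] at h
    calc _ ≤ _ := Finset.sum_le_sum fun i _ => Real.exp_le_exp.2 (by
            have := mul_le_mul_of_nonneg_right (hlow i) hτ.le
            linarith)
      _ ≤ _ := h
      _ = _ := by ring
  have hsum : Summable fun i => Real.exp (-lam i * τ) :=
    summable_of_sum_range_le (fun i => (Real.exp_pos _).le) hpart
  refine ⟨?_, Real.tsum_le_of_sum_range_le (fun i => (Real.exp_pos _).le) hpart⟩
  set T : ℝ := τ ^ (-(m : ℝ) / 2) with hT
  have hT1 : 1 ≤ T :=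
    Real.one_le_rpow_of_pos_of_le_one_of_nonpos hτ hτ1 (by linarith)
  have hTp : T ^ ((2 : ℝ) / m) = τ⁻¹ := by
    rw [hT, ← Real.rpow_mul hτ.le, ← Real.rpow_neg_one]
    congr 1
    field_simp
  have hN1 : (1 : ℝ) ≤ (⌊T⌋₊ : ℝ) := by
    exact_mod_cast (Nat.one_le_floor_iff T).2 hT1
  have hNT : T < ⌊T⌋₊ + 1 := Nat.lt_floor_add_one T
  have hterm : ∀ i ∈ Finset.range ⌊T⌋₊, Real.exp (-c₂) ≤ Real.exp (-lam i * τ) := by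
    intro i hi
    have hiT : (i : ℝ) + 1 ≤ T := by
      have h1 : ((i + 1 : ℕ) : ℝ) ≤ (⌊T⌋₊ : ℝ) := by
        exact_mod_cast Finset.mem_range.1 hi
      push_cast at h1
      exact h1.trans (Nat.floor_le (by linarith))
    have hr : ((i : ℝ) + 1) ^ ((2 : ℝ) / m) ≤ τ⁻¹ :=
      hTp ▸ Real.rpow_le_rpow (by positivity) hiT hp.le
    have hl : lam i * τ ≤ c₂ := by
      calc lam i * τ ≤ c₂ * τ⁻¹ * τ := by
            have := (hup i).trans (mul_le_mul_of_nonneg_left hr hc₂.le)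
            gcongr
        _ = c₂ := by field_simp
    exact Real.exp_le_exp.2 (by linarith)
  calc Real.exp (-c₂) / 2 * T ≤ ⌊T⌋₊ * Real.exp (-c₂) := by
        nlinarith [Real.exp_pos (-c₂)]
    _ = ∑ i ∈ Finset.range ⌊T⌋₊, Real.exp (-c₂) := by simp
    _ ≤ ∑ i ∈ Finset.range ⌊T⌋₊, Real.exp (-lam i * τ) := Finset.sum_le_sum hterm
    _ ≤ _ := hsum.sum_le_tsum _ fun i _ => (Real.exp_pos _).le
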